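/- Let p ≥ 2 be an integer, let v be a finite binary word whose last letter (if v is nonempty) is not 0 and such that 0010110 is not a contiguous subword of v · 0^p, and let v' be any finite binary word. Then |P(v · 01011 · 0^p · v')| ≤ |P(v · 0^p 10110 · v')|, where 0^k denotes a block of k zeroes and · denotes concatenation. -/

import Mathlib

/-!
The two counts are in fact equal. Members of `P(w)` correspond to the positions of `w` at which one
of the patterns `00`, `0100`, `01010` starts, so the count is additive over positions
(`Pcount_cons`). A block `0^p` contributes `p - 1` occurrences plus possibly one at its last zero
(`Pcount_replicate`); in `01011 · 0^p · v'` the two zeroes of `01011` start no pattern and the last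
zero of `0^p` sees `v'`, while in `0^p 10110 · v'` the last zero of `0^p` and the first zero of
`10110` start no pattern and the last zero of `10110` sees `v'`.
Finally, since `v` does not end in `0`, the patterns starting inside `v` do not distinguish a
continuation `010⋯` from a continuation `00⋯` (`Pcount_append_congr`): after a final `01` of `v`,
the former completes `01010` and the latter completes `0100`.
-/

open Filter

/-- `patternAt w i` means the 1-based index `i ≥ 2` in the finite binary word `w`
(`false` = 0, `true` = 1) is a member of the set `P(w)`: one of the patterns
`00`, `0100`, `01010` occurs starting at position `i-1` (1-based) and fits in `w`. -/
def patternAt (w : List Bool) (i : ℕ) : Prop :=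
  2 ≤ i ∧
    ([false, false] <+: w.drop (i - 2) ∨
     [false, true, false, false] <+: w.drop (i - 2) ∨
     [false, true, false, true, false] <+: w.drop (i - 2))

instance (w : List Bool) : DecidablePred (patternAt w) := fun i => by
  unfold patternAt; infer_instance

/-- The set `P(w)` of indices, as a `Finset`. -/
def Pset (w : List Bool) : Finset ℕ :=
  (Finset.range (w.length + 1)).filter (patternAt w)

/-- `|P(w)|`. -/
def Pcount (w : List Bool) : ℕ := (Pset w).card

/-- `|Z(w)|`: the number of zeroes in `w`. -/
def Zcount (w : List Bool) : ℕ := w.count false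

/-- The initial subword `w^(n)` of an infinite binary word `w = w_1 w_2 w_3 ⋯`
(indexed so that `w k` is the letter `w_{k+1}`). -/
def prefixWord (w : ℕ → Bool) (n : ℕ) : List Bool := List.ofFn (fun k : Fin n => w k)

noncomputable def rinf (w : ℕ → Bool) : ℝ :=
  liminf (fun n : ℕ => (Zcount (prefixWord w n) : ℝ) / n) atTop

noncomputable def rsup (w : ℕ → Bool) : ℝ :=
  limsup (fun n : ℕ => (Zcount (prefixWord w n) : ℝ) / n) atTop

noncomputable def Rinf (w : ℕ → Bool) : ℝ :=
  liminf (fun n : ℕ => (Pcount (prefixWord w n) : ℝ) / n) atTop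

noncomputable def Rsup (w : ℕ → Bool) : ℝ :=
  limsup (fun n : ℕ => (Pcount (prefixWord w n) : ℝ) / n) atTop

/-- One of the patterns `00`, `0100`, `01010` is an initial segment of `w`. -/
def startsPattern (w : List Bool) : Prop :=
  [false, false] <+: w ∨ [false, true, false, false] <+: w ∨
    [false, true, false, true, false] <+: w

instance : DecidablePred startsPattern := fun w => by
  unfold startsPattern; infer_instance

/-- `|P(w)|` counts the 0-based positions at which a pattern starts: the index `i` of `P(w)`
corresponds to the position `i - 2`. -/
lemma Pcount_eq_sum (w : List Bool) :
    Pcount w = ∑ j ∈ Finset.range w.length, if startsPattern (w.drop j) then 1 else 0 := by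
  -- The index `w.length + 1` may be added to the range: no pattern fits there.
  have hlast : ¬ patternAt w (w.length + 1) := by
    rintro ⟨-, h⟩
    rcases h with h | h | h <;>
    · have := h.length_le
      simp at this
      omega
  have h0 : ¬ patternAt w 0 := fun h => by simpa using h.1
  have h1 : ¬ patternAt w 1 := fun h => by simpa using h.1
  have h2 : ∀ j, patternAt w (j + 1 + 1) ↔ startsPattern (w.drop j) := fun j => by
    simp [patternAt, startsPattern]
  have hs : Pcount w = ∑ i ∈ Finset.range (w.length + 1 + 1), if patternAt w i then 1 else 0 := by
    rw [Finset.sum_range_succ, if_neg hlast, add_zero, Pcount, Pset, Finset.card_filter]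
  rw [hs, Finset.sum_range_succ', Finset.sum_range_succ', if_neg h0, if_neg (by simpa using h1)]
  simp only [h2, add_zero]

lemma Pcount_cons (a : Bool) (w : List Bool) :
    Pcount (a :: w) = Pcount w + if startsPattern (a :: w) then 1 else 0 := by
  rw [Pcount_eq_sum, Pcount_eq_sum, List.length_cons, Finset.sum_range_succ']
  simp only [List.drop_succ_cons, List.drop_zero]

lemma Pcount_replicate (k : ℕ) (w : List Bool) :
    Pcount (List.replicate (k + 1) false ++ w) = k + Pcount (false :: w) := by
  induction k with
  | zero => simp
  | succ k ih =>
    rw [List.replicate_succ, List.cons_append, Pcount_cons, ih, if_pos]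
    · omega
    · left
      simp [List.replicate_succ]

/-- A pattern starting in a word that does not end in `0` cannot distinguish the continuations
`010⋯` and `00⋯`. Patterns have length at most five, so only words `v` of length at most four need
be distinguished. -/
lemma startsPattern_append (a : Bool) (v s t : List Bool)
    (hv : (a :: v).getLast? ≠ some false) :
    startsPattern (a :: v ++ (false :: true :: false :: s)) ↔
      startsPattern (a :: v ++ (false :: false :: t)) := by
  rcases v with _ | ⟨b, _ | ⟨c, _ | ⟨d, _ | ⟨e, v⟩⟩⟩⟩ <;>
    simp_all [startsPattern]

lemma Pcount_append_congr (v s t : List Bool) (hv : v.getLast? ≠ some false)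
    (hst : Pcount (false :: true :: false :: true :: s) = Pcount (false :: false :: t)) :
    Pcount (v ++ (false :: true :: false :: true :: s)) = Pcount (v ++ (false :: false :: t)) := by
  induction v with
  | nil => exact hst
  | cons a v ih =>
    have ih' := ih (by
      rcases v with _ | ⟨b, v⟩
      · simp
      · simpa using hv)
    rw [List.cons_append, List.cons_append, Pcount_cons, Pcount_cons, ih']
    have := startsPattern_append a v (true :: s) t hv
    simp only [List.cons_append] at this
    simp only [this]

theorem stmt_18 (p : ℕ) (hp : 2 ≤ p) (v v' : List Bool)
    (hlast : v.getLast? ≠ some false)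
    (h : ¬ ([false, false, true, false, true, true, false] <:+:
      (v ++ List.replicate p false))) :
    Pcount (v ++ [false, true, false, true, true] ++ List.replicate p false ++ v') ≤
      Pcount (v ++ List.replicate p false ++ [true, false, true, true, false] ++ v') := by
  
  obtain ⟨k, rfl⟩ : ∃ k, p = k + 2 := ⟨p - 2, by omega⟩
  refine le_of_eq ?_
  have key := Pcount_append_congr v ([true] ++ List.replicate (k + 2) false ++ v')
    (List.replicate k false ++ [true, false, true, true, false] ++ v') hlast ?_
  · simpa [List.replicate_succ] using key
  · have h1 := Pcount_replicate (k + 1) v'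
    have h2 := Pcount_replicate (k + 1) ([true, false, true, true, false] ++ v')
    simp only [List.replicate_succ, List.cons_append, List.nil_append] at h1 h2 ⊢
    simp [Pcount_cons, startsPattern] at h1 h2 ⊢
    omega
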